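/- Define w₁₂(ξ,z) = iz ∫₀^ξ e^{izx} (S_ξ^{−1}1)(x) dx and G(ξ,z) = (1/(1−μ)) [1 − iz ∫₀^ξ e^{−izx} r_ξ(x) dx], where r_ξ = S_ξ^{−1} q. Then for every z ∈ ℂ, w₁₂(ξ,z) = e^{izξ} G(ξ,z) − conj(G(ξ, conj(z))). -/

import Mathlib

open MeasureTheory Complex Set Filter
open scoped ComplexInnerProductSpace ComplexConjugate

noncomputable section

lemma aux_even (ρ h : ℝ → ℝ) (hρ_even : ∀ l : ℝ, ρ (-l) = ρ l)
    (hh : ∀ x : ℝ, (h x : ℂ) =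
      (1 / (2 * Real.pi)) * ∫ l : ℝ, Complex.exp (Complex.I * x * l) * (ρ l : ℂ)) (x : ℝ) :
    h (-x) = h x := by
  have : (h (-x) : ℂ) = h x := by
    rw [hh, hh, ← integral_neg_eq_self]
    congr 2
    funext l
    rw [hρ_even]
    push_cast
    congr 2
    ring
  exact_mod_cast this

lemma aux_cont (ρ h : ℝ → ℝ) (hρ_int : Integrable ρ)
    (hh : ∀ x : ℝ, (h x : ℂ) =
      (1 / (2 * Real.pi)) * ∫ l : ℝ, Complex.exp (Complex.I * x * l) * (ρ l : ℂ)) :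
    Continuous h := by
  have h1 : Continuous (fun x : ℝ => ∫ l : ℝ, Complex.exp (Complex.I * x * l) * (ρ l : ℂ)) := by
    refine continuous_of_dominated (bound := fun l => ‖ρ l‖) ?_ ?_ hρ_int.norm ?_
    · intro x
      refine AEStronglyMeasurable.mul ?_ ?_
      · exact (by fun_prop : Continuous fun l : ℝ => Complex.exp (Complex.I * x * l)).aestronglyMeasurable
      · exact hρ_int.ofReal.aestronglyMeasurable
    · intro x
      refine Eventually.of_forall fun l => ?_
      rw [norm_mul, Complex.norm_exp]
      simp
    · refine Eventually.of_forall fun l => ?_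
      fun_prop
  have h2 : h = fun x : ℝ => ((1 / (2 * Real.pi)) * ∫ l : ℝ, Complex.exp (Complex.I * x * l) * (ρ l : ℂ) : ℂ).re := by
    funext x
    rw [← hh]; simp
  rw [h2]
  exact Complex.continuous_re.comp (continuous_const.mul h1)

lemma aux_refl (ξ : ℝ) : MeasurePreserving (fun x : ℝ => ξ - x)
    (volume.restrict (Ioo (0 : ℝ) ξ)) (volume.restrict (Ioo (0 : ℝ) ξ)) := by
  have := (Measure.measurePreserving_sub_left (volume : Measure ℝ) ξ).restrict_preimage
    (measurableSet_Ioo (a := (0:ℝ)) (b := ξ))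
  simpa using this

lemma aux_refl_int (ξ : ℝ) (f : ℝ → ℂ) :
    ∫ x in Ioo (0 : ℝ) ξ, f (ξ - x) = ∫ x in Ioo (0 : ℝ) ξ, f x :=
  (aux_refl ξ).integral_comp (MeasurableEquiv.subLeft ξ).measurableEmbedding f

lemma aux_J (h J : ℝ → ℝ) (hc : Continuous h)
    (hJ : ∀ x : ℝ, Tendsto (fun T : ℝ => ∫ s in x..T, h s) atTop (nhds (J x))) (x : ℝ) :
    ∫ s in (0:ℝ)..x, h s = J 0 - J x := by
  have h1 := (hJ 0).sub (hJ x)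
  refine tendsto_nhds_unique (tendsto_const_nhds.congr fun T => ?_) h1
  rw [eq_sub_iff_add_eq]
  exact intervalIntegral.integral_add_adjacent_intervals (hc.intervalIntegrable _ _) (hc.intervalIntegrable _ _)

lemma aux_S1 (h J : ℝ → ℝ) (hc : Continuous h) (he : ∀ x, h (-x) = h x)
    (hJ : ∀ x : ℝ, Tendsto (fun T : ℝ => ∫ s in x..T, h s) atTop (nhds (J x)))
    (hJ0 : J 0 = 1 / 2) (ξ : ℝ) (hξ : 0 < ξ) (x : ℝ) :
    ∫ t in Ioo (0 : ℝ) ξ, (h (x - t) : ℂ) = ((1 - J x - J (ξ - x) : ℝ) : ℂ) := by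
  rw [integral_complex_ofReal, ← integral_Ioc_eq_integral_Ioo, ← intervalIntegral.integral_of_le hξ.le,
    intervalIntegral.integral_comp_sub_left]
  have h1 := intervalIntegral.integral_add_adjacent_intervals
    (hc.intervalIntegrable (μ := volume) (x - ξ) 0) (hc.intervalIntegrable 0 x)
  have h2 : ∫ s in (x - ξ)..0, h s = ∫ s in (0:ℝ)..(ξ - x), h s := by
    have := intervalIntegral.integral_comp_neg (a := x - ξ) (b := 0) h
    simp only [he, neg_zero, neg_sub] at this
    exact this
  rw [h2, aux_J h J hc hJ, aux_J h J hc hJ] at h1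
  rw [sub_zero, ← h1, hJ0]
  congr 1; ring

/-- With `w₁₂(ξ,z) = iz ∫₀^ξ e^{izx} (S_ξ^{−1}1)(x) dx` and
`G(ξ,z) = (1/(1−μ))[1 − iz ∫₀^ξ e^{−izx} r_ξ(x) dx]`, `r_ξ = S_ξ^{−1} q`, one has
`w₁₂(ξ,z) = e^{izξ} G(ξ,z) − conj(G(ξ, conj z))` for every `z ∈ ℂ`. -/
theorem statement5
    (U : ℝ) (hU : 0 < U) (ρ : ℝ → ℝ)
    (hρ_even : ∀ l : ℝ, ρ (-l) = ρ l)
    (hρ_int : Integrable ρ)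
    (hρ_bd : ∀ l : ℝ, |ρ l| ≤ U)
    (h : ℝ → ℝ)
    (hh : ∀ x : ℝ, (h x : ℂ) =
      (1 / (2 * Real.pi)) * ∫ l : ℝ, Complex.exp (Complex.I * x * l) * (ρ l : ℂ))
    (μ : ℝ) (hμ₁ : -(1 / U) < μ) (hμ₂ : μ < 1 / U) (hμ₃ : μ ≠ 1)
    (ξ : ℝ) (hξ : 0 < ξ)
    (J : ℝ → ℝ)
    (hJ : ∀ x : ℝ, Tendsto (fun T : ℝ => ∫ s in x..T, h s) atTop (nhds (J x)))
    (hJ0 : J 0 = 1 / 2)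
    (S T : Lp ℂ 2 (volume.restrict (Ioo (0 : ℝ) ξ)) →L[ℂ]
           Lp ℂ 2 (volume.restrict (Ioo (0 : ℝ) ξ)))
    (hS : ∀ f : Lp ℂ 2 (volume.restrict (Ioo (0 : ℝ) ξ)),
      (S f : ℝ → ℂ) =ᵐ[volume.restrict (Ioo (0 : ℝ) ξ)]
        fun x => f x - (μ : ℂ) * ∫ t in Ioo (0 : ℝ) ξ, (h (x - t) : ℂ) * f t)
    (hST : S.comp T = ContinuousLinearMap.id ℂ _)
    (hTS : T.comp S = ContinuousLinearMap.id ℂ _)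
    (one : Lp ℂ 2 (volume.restrict (Ioo (0 : ℝ) ξ)))
    (hone : (one : ℝ → ℂ) =ᵐ[volume.restrict (Ioo (0 : ℝ) ξ)] fun _ => 1)
    (qLp : Lp ℂ 2 (volume.restrict (Ioo (0 : ℝ) ξ)))
    (hq : (qLp : ℝ → ℂ) =ᵐ[volume.restrict (Ioo (0 : ℝ) ξ)] fun x => ((μ * J x : ℝ) : ℂ))
    -- `w₁₂(ξ, ·)` and `G(ξ, ·)`
    (w G : ℂ → ℂ)
    (hw : ∀ z : ℂ, w z =
      Complex.I * z * ∫ x in Ioo (0 : ℝ) ξ, Complex.exp (Complex.I * z * x) * (T one : ℝ → ℂ) x)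
    (hG : ∀ z : ℂ, G z = (1 / (1 - (μ : ℂ))) *
      (1 - Complex.I * z *
        ∫ x in Ioo (0 : ℝ) ξ, Complex.exp (-(Complex.I * z * x)) * (T qLp : ℝ → ℂ) x)) :
    ∀ z : ℂ, w z = Complex.exp (Complex.I * z * ξ) * G z - conj (G (conj z)) := by
  have hc := aux_cont ρ h hρ_int hh
  have he := aux_even ρ h hρ_even hh
  have hR := aux_refl ξ
  have hinj : ∀ f g, S f = S g → f = g := fun f g hfg => by
    have h1 := congrArg T hfg
    have h2 : ∀ f, T (S f) = f := fun f => by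
      simpa using congrArg (fun A => A f) hTS
    rwa [h2, h2] at h1
  have hSTa : ∀ f, S (T f) = f := fun f => by
    simpa using congrArg (fun A => A f) hST
  have hμ' : (1 - (μ : ℂ)) ≠ 0 := by
    rw [sub_ne_zero]; exact_mod_cast hμ₃.symm
  set r := T qLp with hr
  have hSr : S r = qLp := hSTa qLp
  have hrm : MemLp (r : ℝ → ℂ) 2 (volume.restrict (Ioo (0 : ℝ) ξ)) := Lp.memLp r
  have hrRm := hrm.comp_measurePreserving hR
  have hrCm : MemLp (fun x => conj (r x)) 2 (volume.restrict (Ioo (0 : ℝ) ξ)) := hrm.star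
  have hrR := hrRm.coeFn_toLp
  have hrC := hrCm.coeFn_toLp
  set rR := hrRm.toLp _ with hrRdef
  set rC := hrCm.toLp _ with hrCdef
  have hSrq := hS r
  rw [hSr] at hSrq
  -- conjugation invariance
  have hCr : rC = r := by
    apply hinj
    rw [hSr]
    apply Lp.ext
    filter_upwards [hS rC, hrC, hSrq, hq] with x h1 h2 h3 h4
    have h5 : ∫ t in Ioo (0 : ℝ) ξ, (h (x - t) : ℂ) * rC t =
        conj (∫ t in Ioo (0 : ℝ) ξ, (h (x - t) : ℂ) * r t) := by
      rw [← integral_conj]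
      apply integral_congr_ae
      filter_upwards [hrC] with t ht
      rw [ht]; simp
    have h6 : conj (qLp x) = qLp x := by rw [h4, Complex.conj_ofReal]
    rw [h1, h2, h5, ← h6, h3]
    simp
  have hconj : ∀ᵐ x ∂(volume.restrict (Ioo (0 : ℝ) ξ)), conj (r x) = r x := by
    rw [hCr] at hrC
    filter_upwards [hrC] with x hx using hx.symm
  -- the reflected function
  have hSR : (S rR : ℝ → ℂ) =ᵐ[volume.restrict (Ioo (0 : ℝ) ξ)]
      fun x => ((μ * J (ξ - x) : ℝ) : ℂ) := by
    have h3' := hR.quasiMeasurePreserving.ae (hSrq.and hq)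
    filter_upwards [hS rR, hrR, h3'] with x h1 h2 h3
    have h5 : ∫ t in Ioo (0 : ℝ) ξ, (h (x - t) : ℂ) * rR t =
        ∫ t in Ioo (0 : ℝ) ξ, (h (ξ - x - t) : ℂ) * r t := by
      rw [← aux_refl_int ξ (fun t => (h (ξ - x - t) : ℂ) * r t)]
      apply integral_congr_ae
      filter_upwards [hrR] with t ht
      rw [ht, ← he (x - t)]
      simp only [Function.comp]
      congr 3; ring
    rw [h1, h2, h5, ← h3.2, h3.1]
    rfl
  have hT1 : T one = (1 / (1 - (μ : ℂ))) • (one - r - rR) := by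
    apply hinj
    rw [hSTa, map_smul, map_sub, map_sub, hSr]
    apply Lp.ext
    filter_upwards [Lp.coeFn_smul (1 / (1 - (μ : ℂ))) (S one - qLp - S rR),
      Lp.coeFn_sub (S one - qLp) (S rR), Lp.coeFn_sub (S one) qLp, hS one, hone, hSR, hq]
      with x h1 h2 h3 h4 h5 h6 h7
    have h8 : ∫ t in Ioo (0 : ℝ) ξ, (h (x - t) : ℂ) * one t =
        ((1 - J x - J (ξ - x) : ℝ) : ℂ) := by
      rw [← aux_S1 h J hc he hJ hJ0 ξ hξ x]
      apply integral_congr_ae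
      filter_upwards [hone] with t ht
      rw [ht, mul_one]
    rw [h1, Pi.smul_apply, h2, Pi.sub_apply, h3, Pi.sub_apply, h4, h5, h6, h7, h8, smul_eq_mul]
    push_cast
    field_simp
    ring
  have hT1' : (T one : ℝ → ℂ) =ᵐ[volume.restrict (Ioo (0 : ℝ) ξ)]
      fun x => (1 / (1 - (μ : ℂ))) * (1 - r x - r (ξ - x)) := by
    rw [hT1]
    filter_upwards [Lp.coeFn_smul (1 / (1 - (μ : ℂ))) (one - r - rR),
      Lp.coeFn_sub (one - r) rR, Lp.coeFn_sub one r, hone, hrR] with x h1 h2 h3 h4 h5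
    rw [h1, Pi.smul_apply, h2, Pi.sub_apply, h3, Pi.sub_apply, h4, h5, smul_eq_mul]
    rfl
  intro z
  have hexpm : ∀ c : ℂ, MemLp (fun x : ℝ => Complex.exp (c * x)) 2
      (volume.restrict (Ioo (0 : ℝ) ξ)) := fun c => by
    have hcont : Continuous (fun x : ℝ => Complex.exp (c * x)) := by fun_prop
    obtain ⟨C, hC⟩ := (isCompact_Icc (a := (0:ℝ)) (b := ξ)).exists_bound_of_continuousOn
      hcont.continuousOn
    refine MemLp.of_bound hcont.aestronglyMeasurable C ?_
    filter_upwards [ae_restrict_mem measurableSet_Ioo] with x hx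
    exact hC x (Ioo_subset_Icc_self hx)
  have i0 : IntegrableOn (fun x : ℝ => Complex.exp (Complex.I * z * x)) (Ioo (0 : ℝ) ξ) :=
    (hexpm _).integrable (by norm_num)
  have i1 : IntegrableOn (fun x : ℝ => Complex.exp (Complex.I * z * x) * r x) (Ioo (0 : ℝ) ξ) :=
    (hexpm _).integrable_mul hrm
  have i2 : IntegrableOn (fun x : ℝ => Complex.exp (Complex.I * z * x) * r (ξ - x))
      (Ioo (0 : ℝ) ξ) :=
    (hexpm _).integrable_mul hrRm
  have e0 : Complex.I * z * ∫ x in Ioo (0 : ℝ) ξ, Complex.exp (Complex.I * z * x) =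
      Complex.exp (Complex.I * z * ξ) - 1 := by
    by_cases hz : Complex.I * z = 0
    · simp [hz]
    · rw [← integral_Ioc_eq_integral_Ioo, ← intervalIntegral.integral_of_le hξ.le,
        integral_exp_mul_complex hz]
      rw [mul_div_cancel₀ _ hz]
      simp
  have e2 : ∫ x in Ioo (0 : ℝ) ξ, Complex.exp (Complex.I * z * x) * r (ξ - x) =
      Complex.exp (Complex.I * z * ξ) *
        ∫ x in Ioo (0 : ℝ) ξ, Complex.exp (-(Complex.I * z * x)) * r x := by
    rw [← integral_const_mul, ← aux_refl_int ξ]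
    congr 1
    funext x
    rw [← mul_assoc, ← Complex.exp_add, sub_sub_cancel]
    congr 2
    push_cast; ring
  have e1 : conj (∫ x in Ioo (0 : ℝ) ξ, Complex.exp (-(Complex.I * conj z * x)) * r x) =
      ∫ x in Ioo (0 : ℝ) ξ, Complex.exp (Complex.I * z * x) * r x := by
    rw [← integral_conj]
    apply integral_congr_ae
    filter_upwards [hconj] with x hx
    rw [map_mul, hx, ← Complex.exp_conj]
    simp
  have ew : ∫ x in Ioo (0 : ℝ) ξ, Complex.exp (Complex.I * z * x) * (T one : ℝ → ℂ) x =
      (1 / (1 - (μ : ℂ))) * ((∫ x in Ioo (0 : ℝ) ξ, Complex.exp (Complex.I * z * x)) -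
        (∫ x in Ioo (0 : ℝ) ξ, Complex.exp (Complex.I * z * x) * r x) -
        ∫ x in Ioo (0 : ℝ) ξ, Complex.exp (Complex.I * z * x) * r (ξ - x)) := by
    rw [← integral_sub i0 i1, ← integral_sub (f := fun x : ℝ => Complex.exp (Complex.I * z * x) -
      Complex.exp (Complex.I * z * x) * r x) (i0.sub i1) i2, ← integral_const_mul]
    apply integral_congr_ae
    filter_upwards [hT1'] with x hx
    rw [hx]

    ring
  rw [hw, hG, hG, ew, e2]
  simp only [map_mul, map_sub, map_div₀, map_one, Complex.conj_ofReal, Complex.conj_I,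
    Complex.conj_conj, e1]
  linear_combination (1 / (1 - (μ : ℂ))) * e0
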